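/- Let T > 0, let K ⊆ ℝ be a nonempty compact set, and let ν : [0,T] × K → ℝ be continuous with inf_{(t,x)} ν(t,x) > 0. Then for every ε > 0 there exist a continuously differentiable function g : [0,T] × K × ℝ → ℝ and a function ν* : [0,T] × K → (0,∞) such that for every (t,x) ∈ [0,T] × K: (a) z = ν*(t,x) is the unique positive real solution of g(t,x,z) = 0; (b) ∂_z g(t,x,ν*(t,x)) ≠ 0; and (c) sup_{(t,x) ∈ [0,T] × K} |ν*(t,x) − ν(t,x)| < ε. -/

import Mathlib

theorem exists_contDiff_near (S : Set (ℝ × ℝ)) (hS : IsCompact S) (ν : ℝ × ℝ → ℝ)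
    (hν : ContinuousOn ν S) (ε : ℝ) (hε : 0 < ε) :
    ∃ f : ℝ × ℝ → ℝ, ContDiff ℝ 1 f ∧ ∀ p ∈ S, |f p - ν p| < ε := by
  have : CompactSpace S := isCompact_iff_compactSpace.mp hS
  let A : Subalgebra ℝ C(S, ℝ) :=
    { carrier := {h | ∃ f : ℝ × ℝ → ℝ, ContDiff ℝ 1 f ∧ ∀ p : S, h p = f p}
      mul_mem' := by
        rintro a b ⟨f, hf, hf2⟩ ⟨g, hg, hg2⟩
        exact ⟨fun p => f p * g p, hf.mul hg, fun p => by simp [hf2, hg2]⟩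
      add_mem' := by
        rintro a b ⟨f, hf, hf2⟩ ⟨g, hg, hg2⟩
        exact ⟨fun p => f p + g p, hf.add hg, fun p => by simp [hf2, hg2]⟩
      algebraMap_mem' := by
        intro r
        exact ⟨fun _ => r, contDiff_const, fun p => by simp⟩ }
  have hA : A.SeparatesPoints := by
    intro x y hxy
    by_cases h1 : (x : ℝ × ℝ).1 = (y : ℝ × ℝ).1
    · have h2 : (x : ℝ × ℝ).2 ≠ (y : ℝ × ℝ).2 := fun h2 =>
        hxy (Subtype.ext (Prod.ext h1 h2))
      exact ⟨_, ⟨⟨fun p : S => (p : ℝ × ℝ).2, by fun_prop⟩,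
        ⟨fun p => p.2, contDiff_snd, fun p => rfl⟩, rfl⟩, h2⟩
    · exact ⟨_, ⟨⟨fun p : S => (p : ℝ × ℝ).1, by fun_prop⟩,
        ⟨fun p => p.1, contDiff_fst, fun p => rfl⟩, rfl⟩, h1⟩
  obtain ⟨⟨h, f, hf, hf2⟩, hh⟩ :=
    ContinuousMap.exists_mem_subalgebra_near_continuous_of_separatesPoints A hA
      (S.domRestrict ν) hν.domRestrict ε hε
  refine ⟨f, hf, fun p hp => ?_⟩
  have := hh ⟨p, hp⟩
  simpa [hf2] using this

/-- Universal approximation property of canonical Neural-Brownian Motions: any continuous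
target volatility `ν` bounded away from zero on a compact set `[0,T] × K` can be
reproduced to arbitrary uniform accuracy `ε` as the implicit volatility `ν*` of some
`C¹` driver `g` satisfying the unique-positive-root and regularity conditions. -/
theorem nbm_universal_approximation
    (T : ℝ) (hT : 0 < T) (K : Set ℝ) (hK : IsCompact K) (hKne : K.Nonempty)
    (ν : ℝ × ℝ → ℝ) (hν : ContinuousOn ν (Set.Icc 0 T ×ˢ K))
    (hinf : 0 < sInf (ν '' (Set.Icc 0 T ×ˢ K))) :
    ∀ ε > (0 : ℝ), ∃ (g : ℝ × ℝ × ℝ → ℝ) (νstar : ℝ × ℝ → ℝ),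
      ContDiff ℝ 1 g ∧
      ∀ p ∈ Set.Icc 0 T ×ˢ K,
        0 < νstar p ∧
        g (p.1, p.2, νstar p) = 0 ∧
        (∀ z : ℝ, 0 < z → g (p.1, p.2, z) = 0 → z = νstar p) ∧
        deriv (fun z => g (p.1, p.2, z)) (νstar p) ≠ 0 ∧
        |νstar p - ν p| < ε := by
  intro ε hε
  have hS : IsCompact (Set.Icc 0 T ×ˢ K) := isCompact_Icc.prod hK
  have hbdd := (hS.image_of_continuousOn hν).bddBelow
  obtain ⟨f, hf, hf2⟩ := exists_contDiff_near _ hS ν hν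
    (min ε (sInf (ν '' (Set.Icc 0 T ×ˢ K)))) (lt_min hε hinf)
  refine ⟨fun q => q.2.2 - f (q.1, q.2.1), f, by fun_prop, fun p hp => ?_⟩
  have h1 := hf2 p hp
  have h2 := csInf_le hbdd (Set.mem_image_of_mem ν hp)
  obtain ⟨h3, h4⟩ := lt_min_iff.mp h1
  refine ⟨?_, by simp, fun z _ hz => ?_, ?_, h3⟩
  · linarith [(abs_lt.mp h4).1]
  · simpa [sub_eq_zero] using hz
  · simp
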